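/- For every t0 ∈ span(𝒥), set G_{t0} := {J ∈ 𝒥 : t0 − d < I(J)⁺ ≤ t0} and, for J ∈ G_{t0}, τ_J := ((t0 − I(J)⁺)/d)·len(J) + I(J)⁻. Then: (i) for every J ∈ G_{t0}, τ_J ∈ I(J) ∩ [t0 − d, t0) (in particular J ∈ 𝒥(τ_J), so r̃(𝒥(τ_J))(J) is defined); and (ii) ∑_{J ∈ 𝒥(t0)} r̃(𝒥(t0))(J) + ∑_{J ∈ G_{t0}} r̃(𝒥(τ_J))(J) ≥ ∑_{J ∈ 𝒥(t0) ∪ ℋ(t0)} r̃(𝒥(t0) ∪ ℋ(t0))(J). -/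

import Mathlib

open scoped Classical
open Finset MeasureTheory

namespace BSHM

noncomputable section

/-- The set of candidate parents of machine type `i`: types `j ∈ M` with `j > i`
and a strictly smaller normalized cost rate per capacity unit. -/
def pset (m : ℕ) (g r : ℕ → ℝ) (i : ℕ) : Set ℕ :=
  {j | j ≤ m ∧ i < j ∧ r j / g j < r i / g i}

/-- The parent `p i` of machine type `i` (equal to `0` when the parent is undefined,
since any actual parent has index `≥ 2`). -/
def p (m : ℕ) (g r : ℕ → ℝ) (i : ℕ) : ℕ := sInf (pset m g r i)

/-- `pdef i` asserts that the parent of `i` is defined. -/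
def pdef (m : ℕ) (g r : ℕ → ℝ) (i : ℕ) : Prop := (pset m g r i).Nonempty

/-- One step of the parent relation: `b` is the (defined) parent of `a`. -/
def pstep (m : ℕ) (g r : ℕ → ℝ) (a b : ℕ) : Prop :=
  pdef m g r a ∧ b = p m g r a

/-- `P i`: the set consisting of `i` together with all of its iterated parents. -/
def P (m : ℕ) (g r : ℕ → ℝ) (i : ℕ) : Set ℕ :=
  {z | Relation.ReflTransGen (pstep m g r) i z}

/-- `A i`: the set of nodes in the tree rooted at `i`,
i.e. all `z ∈ M` having `i` as an ancestor (or equal to `i`). -/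
def A (m : ℕ) (g r : ℕ → ℝ) (i : ℕ) : Set ℕ :=
  {z | 1 ≤ z ∧ z ≤ m ∧ i ∈ P m g r z}

/-- `v i`: the lowest-indexed node in the tree rooted at `i`. -/
def v (m : ℕ) (g r : ℕ → ℝ) (i : ℕ) : ℕ := sInf (A m g r i)

/-- `y i`: the younger siblings of `i` (same parent status, smaller index). -/
def y (m : ℕ) (g r : ℕ → ℝ) (i : ℕ) : Set ℕ :=
  {z | 1 ≤ z ∧ z ≤ m ∧ z < i ∧ p m g r z = p m g r i}

/-- `esib i`: the elder siblings of `i`. -/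
def esib (m : ℕ) (g r : ℕ → ℝ) (i : ℕ) : Set ℕ :=
  {z | 1 ≤ z ∧ z ≤ m ∧ i < z ∧ p m g r z = p m g r i}

/-- `T k := {k} ∪ ⋃_{z ∈ P(k)} y(z)`. -/
def T (m : ℕ) (g r : ℕ → ℝ) (k : ℕ) : Set ℕ :=
  {k} ∪ ⋃ z ∈ P m g r k, y m g r z

/-- `T k` as a `Finset` (all relevant nodes lie in `{k} ∪ [1, m]`). -/
def TIcc (m : ℕ) (g r : ℕ → ℝ) (k : ℕ) : Finset ℕ :=
  (insert k (Finset.Icc 1 m)).filter (fun z => z ∈ T m g r k)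

/-! ### Jobs and one-shot scheduling -/

variable {ι : Type*}

/-- The exact machine type of a job `J`: the least `z ∈ M` with `s J ≤ g z`. -/
def mty (m : ℕ) (g : ℕ → ℝ) (s : ι → ℝ) (J : ι) : ℕ :=
  sInf {z | 1 ≤ z ∧ z ≤ m ∧ s J ≤ g z}

/-- Total size of a finite set of jobs. -/
def Ssum (s : ι → ℝ) (W : Finset ι) : ℝ := ∑ J ∈ W, s J

/-- `k0f X`: the highest-indexed exact machine type among the jobs of `X`. -/
def k0f (m : ℕ) (g : ℕ → ℝ) (s : ι → ℝ) (X : Finset ι) : ℕ :=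
  X.sup (fun J => mty m g s J)

/-- `H z X`: the jobs of `X` whose exact machine type lies in the tree rooted at `z`. -/
def H (m : ℕ) (g r : ℕ → ℝ) (s : ι → ℝ) (z : ℕ) (X : Finset ι) : Finset ι :=
  X.filter (fun J => mty m g s J ∈ A m g r z)

/-- `SH X z := S(H_z(X))`. -/
def SH (m : ℕ) (g r : ℕ → ℝ) (s : ι → ℝ) (X : Finset ι) (z : ℕ) : ℝ :=
  Ssum s (H m g r s z X)

/-- Feasibility of a machine configuration `w : M → ℕ` for the job set `X`. -/
def Feasible (m : ℕ) (g : ℕ → ℝ) (s : ι → ℝ) (X : Finset ι) (w : ℕ → ℕ) : Prop :=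
  ∀ i, 1 ≤ i → i ≤ m →
    Ssum s (X.filter (fun J => i ≤ mty m g s J)) ≤ ∑ z ∈ Finset.Icc i m, (w z : ℝ) * g z

/-- The cost of a machine configuration. -/
def cost (m : ℕ) (r : ℕ → ℝ) (w : ℕ → ℕ) : ℝ :=
  ∑ z ∈ Finset.Icc 1 m, (w z : ℝ) * r z

/-- The optimal one-shot scheduling cost for a job set `X`. -/
def OPT1 (m : ℕ) (g r : ℕ → ℝ) (s : ι → ℝ) (X : Finset ι) : ℝ :=
  sInf {c : ℝ | ∃ w : ℕ → ℕ, Feasible m g s X w ∧ c = cost m r w}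

/-- The fractional machine configuration `cn_{z*}` for the job set `X`, with
highest-indexed machine type `zs`.  A node `i ∈ T(zs) \ {zs}` is the boundary
type `i*` exactly when `∑_{z ∈ T(zs), z > i} S(H_z) ≤ cn(zs)·g(zs) <
∑_{z ∈ T(zs), z ≥ i} S(H_z)`; nodes above the boundary get `0`,
nodes below it get `S(H_i)/g_i`. -/
def cn (m : ℕ) (g r : ℕ → ℝ) (s : ι → ℝ) (X : Finset ι) (zs i : ℕ) : ℝ :=
  let B : ℝ := (⌈SH m g r s X zs / g zs⌉₊ : ℝ) * g zs
  let Sge : ℝ := ∑ z ∈ (TIcc m g r zs).filter (fun z => i ≤ z), SH m g r s X z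
  let Sgt : ℝ := ∑ z ∈ (TIcc m g r zs).filter (fun z => i < z), SH m g r s X z
  if i = zs then (⌈SH m g r s X zs / g zs⌉₊ : ℝ)
  else if i ∈ T m g r zs then
    (if Sgt ≤ B ∧ B < Sge then (Sge - B) / g i
     else if B < Sgt then SH m g r s X i / g i
     else 0)
  else 0

/-- `cn_{zs}` is decent: for every strict ancestor `zt` of `zs`, the total cost of
the machines of types in `T(zs) ∩ A(zt)` is at most the cost of one type-`zt` machine. -/
def decent (m : ℕ) (g r : ℕ → ℝ) (s : ι → ℝ) (X : Finset ι) (zs : ℕ) : Prop :=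
  ∀ zt ∈ P m g r zs, zt ≠ zs →
    (∑ z ∈ (TIcc m g r zs).filter (fun z => z ∈ A m g r zt), cn m g r s X zs z * r z) ≤ r zt

/-- `z⋄(X)`: the least `z* ∈ P(k0(X))` such that `cn_{z*}` is decent. -/
def zdia (m : ℕ) (g r : ℕ → ℝ) (s : ι → ℝ) (X : Finset ι) : ℕ :=
  sInf {zs | zs ∈ P m g r (k0f m g s X) ∧ decent m g r s X zs}

/-- The child of `zd` whose subtree contains node `k`. -/
def chil (m : ℕ) (g r : ℕ → ℝ) (zd k : ℕ) : ℕ :=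
  sInf {i | p m g r i = zd ∧ k ∈ A m g r i}

/-- The node `i ∈ T(zd)` whose subtree contains node `k`. -/
def idxT (m : ℕ) (g r : ℕ → ℝ) (zd k : ℕ) : ℕ :=
  sInf {i | i ∈ T m g r zd ∧ k ∈ A m g r i}

/-- The children `f(zd)` of node `zd`, as a `Finset`. -/
def fchFin (m : ℕ) (g r : ℕ → ℝ) (zd : ℕ) : Finset ℕ :=
  (Finset.Icc 1 m).filter (fun z => p m g r z = zd)

/-- The cost `r̃(X)(J)` charged to the job `J` of the job set `X`. -/
def charge (m : ℕ) (g r : ℕ → ℝ) (s : ι → ℝ) (X : Finset ι) (J : ι) : ℝ :=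
  let zd := zdia m g r s X
  let ρ : ℕ → ℝ := fun i => r i / g i
  let Hh := X.filter (fun J' => mty m g s J' = zd)
  let c : ℝ := Ssum s Hh * ρ zd + ∑ i ∈ fchFin m g r zd, SH m g r s X i * ρ i
  if mty m g s J ∈ A m g r zd then
    if g zd ≤ SH m g r s X zd then s J * ρ zd
    else if r zd < c then
      if mty m g s J = zd then s J * ρ zd
      else
        s J * (ρ (chil m g r zd (mty m g s J)) -
          (ρ (chil m g r zd (mty m g s J)) - ρ zd) *
            ((c - r zd) /
              (∑ i ∈ fchFin m g r zd, ∑ J' ∈ H m g r s i X, s J' * (ρ i - ρ zd))))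
    else
      if mty m g s J = zd then s J * ρ zd * (1 + (r zd - c) / (Ssum s Hh * ρ zd))
      else s J * ρ (chil m g r zd (mty m g s J))
  else s J * ρ (idxT m g r zd (mty m g s J))

/-! ### Jobs with active intervals -/

/-- `span(X) := ⋃_{J ∈ X} [Ilo J, Ihi J)`. -/
def spanSet (Ilo Ihi : ι → ℝ) (X : Finset ι) : Set ℝ :=
  ⋃ J ∈ X, Set.Ico (Ilo J) (Ihi J)

/-- `X(t)`: the jobs of `X` active at time `t`. -/
def activeJ (Ilo Ihi : ι → ℝ) (X : Finset ι) (t : ℝ) : Finset ι :=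
  X.filter (fun J => Ilo J ≤ t ∧ t < Ihi J)

/-- `X(t) ∪ ℋ(t)` where `ℋ = {F_d(J) : J ∈ X}`: the original jobs are embedded
via `Sum.inl`, and the artificial job `F_d(J)` (with size `s J` and active set
`[Ihi J, Ihi J + d) ∩ span(X)`) is represented by `Sum.inr J`. -/
def activeJH (Ilo Ihi : ι → ℝ) (X : Finset ι) (d t : ℝ) : Finset (ι ⊕ ι) :=
  (X.image Sum.inl ∪ X.image Sum.inr).filter
    (fun x => Sum.elim
      (fun J => Ilo J ≤ t ∧ t < Ihi J)
      (fun J => (Ihi J ≤ t ∧ t < Ihi J + d) ∧ t ∈ spanSet Ilo Ihi X) x)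

end

end BSHM

namespace BSHM

/-! A job active at a time `t ∈ [t0 - d, t0]` is at time `t0` either still active or represented by
its follow-up, so `𝒥(t)` embeds into `𝒥(t0) ∪ ℋ(t0)` with sizes preserved. Taking `t = t0` and
`t = τ_J`, the inequality holds job by job once we know that enlarging a job set never increases
the charge of a job already present.

For that monotonicity, `P(a)` consists of the successive strict record lows of `r/g` to the right
of `a`, and `T(k)` of the indices that minimize `r/g` on the stretch from themselves to `k`. Hence
`r/g` is increasing along `T(k)`, and a comparison of the upper sums of the capacities
`cn(j)·g(j)` yields, by Abel summation, a comparison of costs. An upper sum equals `max(S, B)`,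
where `S` is the demand and `B` the capacity of the top type; both comparisons together show that
`z⋄` grows with the job set. If `z⋄` stays put, the charge can only decrease because `α*` increases
and `β*` decreases. If `z⋄` strictly grows, the old charge of a job `J` is at least `s(J)` times
the rate of some type in `P(m(J))`, the new charge is at most `s(J)` times the rate of another one,
and rates decrease along `P(m(J))`.
-/

/-! ### The forest of machine types -/

section Forest

variable {m : ℕ} {g r : ℕ → ℝ} {a b c i j k z : ℕ}

/-- The normalized cost rate `r(i)/g(i)` of machine type `i`. -/
noncomputable def rate (g r : ℕ → ℝ) (i : ℕ) : ℝ := r i / g i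

theorem p_le_of_rate_lt (hjm : j ≤ m) (hij : i < j) (h : rate g r j < rate g r i) :
    p m g r i ≤ j :=
  Nat.sInf_le ⟨hjm, hij, h⟩

theorem pdef.p_mem_pset (h : pdef m g r i) : p m g r i ∈ pset m g r i :=
  Nat.sInf_mem h

theorem pdef.p_le (h : pdef m g r i) : p m g r i ≤ m :=
  h.p_mem_pset.1

theorem pdef.lt_p (h : pdef m g r i) : i < p m g r i :=
  h.p_mem_pset.2.1

theorem pdef.rate_p_lt (h : pdef m g r i) : rate g r (p m g r i) < rate g r i :=
  h.p_mem_pset.2.2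

theorem pdef.p_mem_P (h : pdef m g r i) : p m g r i ∈ P m g r i :=
  .single ⟨h, rfl⟩

theorem pdef_iff_p_pos : pdef m g r i ↔ 0 < p m g r i := by
  refine ⟨fun h ↦ (Nat.zero_le i).trans_lt h.lt_p, fun h ↦ ?_⟩
  by_contra hn
  simp [p, Set.not_nonempty_iff_eq_empty.mp hn] at h

theorem pdef_of_p_eq (hz : 1 ≤ z) (h : p m g r i = z) : pdef m g r i :=
  pdef_iff_p_pos.mpr (h ▸ hz)

theorem rate_le_of_lt_p (hjm : j ≤ m) (hij : i ≤ j) (hjp : j < p m g r i) :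
    rate g r i ≤ rate g r j := by
  rcases hij.eq_or_lt with rfl | hij
  · exact le_rfl
  · exact not_lt.mp fun h ↦ (p_le_of_rate_lt hjm hij h).not_gt hjp

theorem mem_P_self : a ∈ P m g r a :=
  .refl

theorem mem_P_trans (hab : b ∈ P m g r a) (hbc : c ∈ P m g r b) : c ∈ P m g r a :=
  .trans hab hbc

theorem mem_P_cases_tail (h : c ∈ P m g r a) :
    c = a ∨ ∃ b ∈ P m g r a, pdef m g r b ∧ p m g r b = c :=
  (Relation.ReflTransGen.cases_tail h).imp id fun ⟨b, hb, hd, hc⟩ ↦ ⟨b, hb, hd, hc.symm⟩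

theorem le_of_mem_P (h : c ∈ P m g r a) : a ≤ c := by
  change Relation.ReflTransGen _ _ _ at h
  induction h with
  | refl => exact le_rfl
  | tail _ hbc ih => exact ih.trans (hbc.2 ▸ hbc.1.lt_p.le)

theorem le_of_mem_P_of_lt (h : c ∈ P m g r a) (hac : a < c) : c ≤ m := by
  rcases mem_P_cases_tail h with rfl | ⟨b, -, hb, rfl⟩
  · exact absurd hac (lt_irrefl _)
  · exact hb.p_le

theorem le_m_of_mem_P (ha : a ≤ m) (h : c ∈ P m g r a) : c ≤ m :=
  (le_of_mem_P h).eq_or_lt.elim (fun hac ↦ hac ▸ ha) (le_of_mem_P_of_lt h)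

theorem rate_lt_of_mem_P (h : c ∈ P m g r a) (haj : a ≤ j) (hjc : j < c) :
    rate g r c < rate g r j := by
  change Relation.ReflTransGen _ _ _ at h
  induction h with
  | refl => omega
  | @tail b c _ hbc ih =>
    obtain ⟨hb, rfl⟩ := hbc
    rcases lt_or_ge j b with hjb | hbj
    · exact hb.rate_p_lt.trans (ih hjb)
    · exact hb.rate_p_lt.trans_le (rate_le_of_lt_p (hjc.le.trans hb.p_le) hbj hjc)

theorem rate_le_of_mem_P (h : c ∈ P m g r a) : rate g r c ≤ rate g r a :=
  (le_of_mem_P h).eq_or_lt.elim (fun hac ↦ hac ▸ le_rfl) fun hac ↦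
    (rate_lt_of_mem_P h le_rfl hac).le

theorem mem_P_of_forall_rate_lt {a : ℕ} (hac : a ≤ c) (hcm : c ≤ m)
    (h : ∀ j, a ≤ j → j < c → rate g r c < rate g r j) : c ∈ P m g r a := by
  rcases hac.eq_or_lt with rfl | hac
  · exact mem_P_self
  · have ha : pdef m g r a := ⟨c, hcm, hac, h a le_rfl hac⟩
    have hlt := ha.lt_p
    have hle := p_le_of_rate_lt hcm hac (h a le_rfl hac)
    exact mem_P_trans ha.p_mem_P
      (mem_P_of_forall_rate_lt hle hcm fun j hj ↦ h j (hlt.le.trans hj))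
termination_by c - a

theorem mem_P_of_mem_P_of_le (h : c ∈ P m g r a) (hab : a ≤ b) (hbc : b ≤ c) :
    c ∈ P m g r b := by
  rcases hbc.eq_or_lt with rfl | hlt
  · exact mem_P_self
  · exact mem_P_of_forall_rate_lt hbc (le_of_mem_P_of_lt h (hab.trans_lt hlt))
      fun j hj ↦ rate_lt_of_mem_P h (hab.trans hj)

theorem p_le_of_mem_P (h : b ∈ P m g r a) (hab : a < b) : p m g r a ≤ b :=
  p_le_of_rate_lt (le_of_mem_P_of_lt h hab) hab (rate_lt_of_mem_P h le_rfl hab)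

theorem eq_of_p_eq (ha : a ∈ P m g r k) (hb : b ∈ P m g r k) (hp : p m g r a = p m g r b)
    (hd : pdef m g r a) : a = b := by
  wlog hab : a ≤ b generalizing a b
  · exact (this hb ha hp.symm (pdef_iff_p_pos.mpr (hp ▸ pdef_iff_p_pos.mp hd))
      (le_of_not_ge hab)).symm
  by_contra hne
  have hle := p_le_of_mem_P (mem_P_of_mem_P_of_le hb (le_of_mem_P ha) hab)
    (lt_of_le_of_ne hab hne)
  have hlt := (pdef_iff_p_pos.mpr (hp ▸ pdef_iff_p_pos.mp hd) : pdef m g r b).lt_p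
  omega

theorem exists_mem_P_forall_rate_le {k : ℕ} (hkz : k ≤ z) (hzm : z ≤ m) :
    ∃ i ∈ P m g r k, i ≤ z ∧ ∀ j, i < j → j ≤ z → rate g r i ≤ rate g r j := by
  by_cases hmin : ∀ j, k < j → j ≤ z → rate g r k ≤ rate g r j
  · exact ⟨k, mem_P_self, hkz, hmin⟩
  push Not at hmin
  obtain ⟨j, hkj, hjz, hlt⟩ := hmin
  have hk : pdef m g r k := ⟨j, hjz.trans hzm, hkj, hlt⟩
  have hpz := (p_le_of_rate_lt (hjz.trans hzm) hkj hlt).trans hjz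
  obtain ⟨i, hi, hiz⟩ := exists_mem_P_forall_rate_le hpz hzm
  exact ⟨i, mem_P_trans hk.p_mem_P hi, hiz⟩
termination_by z - k
decreasing_by exact Nat.sub_lt_sub_left (hkj.trans_le hjz) hk.lt_p

theorem exists_mem_P_not_pdef (hkm : k ≤ m) : ∃ z ∈ P m g r k, ¬ pdef m g r z := by
  obtain ⟨z, hz, -, hmin⟩ := exists_mem_P_forall_rate_le (g := g) (r := r) hkm le_rfl
  exact ⟨z, hz, fun ⟨j, hjm, hzj, hlt⟩ ↦ (hmin j hzj hjm).not_gt hlt⟩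

theorem eq_of_mem_P_of_not_pdef (hz : ¬ pdef m g r z) (h : c ∈ P m g r z) : c = z := by
  rcases Relation.ReflTransGen.cases_head h with rfl | ⟨_, hzb, -⟩
  · rfl
  · exact absurd hzb.1 hz

theorem rate_le_of_mem_y (hzm : z ≤ m) (hi : i ∈ y m g r z) (hij : i < j) (hjz : j ≤ z) :
    rate g r i ≤ rate g r j := by
  by_contra! hlt
  have hle := p_le_of_rate_lt (hjz.trans hzm) hij hlt
  have hip := pdef.lt_p ⟨j, hjz.trans hzm, hij, hlt⟩
  have hzp := pdef.lt_p (pdef_iff_p_pos.mpr (hi.2.2.2 ▸ (Nat.zero_le i).trans_lt hip))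
  have hp := hi.2.2.2
  omega

theorem exists_mem_P_mem_y (hi : 1 ≤ i) (hik : i < k) (hkm : k ≤ m)
    (hmin : ∀ j, i < j → j ≤ k → rate g r i ≤ rate g r j) : ∃ z ∈ P m g r k, i ∈ y m g r z := by
  by_cases hd : pdef m g r i
  · have hkp : k < p m g r i := not_le.mp fun h ↦ (hmin _ hd.lt_p h).not_gt hd.rate_p_lt
    have hpk : p m g r i ∈ P m g r k := mem_P_of_forall_rate_lt hkp.le hd.p_le fun j hkj hjp ↦
      hd.rate_p_lt.trans_le (rate_le_of_lt_p (hjp.le.trans hd.p_le) (hik.le.trans hkj) hjp)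
    rcases mem_P_cases_tail hpk with h | ⟨z, hz, -, hzp⟩
    · omega
    · exact ⟨z, hz, hi, hik.le.trans hkm, hik.trans_le (le_of_mem_P hz), hzp.symm⟩
  · obtain ⟨z, hz, hzd⟩ := exists_mem_P_not_pdef (g := g) (r := r) hkm
    refine ⟨z, hz, hi, hik.le.trans hkm, hik.trans_le (le_of_mem_P hz), ?_⟩
    rw [pdef_iff_p_pos] at hd hzd
    omega

theorem mem_T_iff (hk : k ∈ Set.Icc 1 m) :
    i ∈ T m g r k ↔ 1 ≤ i ∧ i ≤ k ∧ ∀ j, i < j → j ≤ k → rate g r i ≤ rate g r j := by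
  constructor
  · rintro (rfl | h)
    · exact ⟨hk.1, le_rfl, fun j _ _ ↦ by omega⟩
    obtain ⟨z, hz, hi⟩ := Set.mem_iUnion₂.mp h
    have hmin : ∀ j, i < j → j ≤ z → rate g r i ≤ rate g r j := fun j ↦
      rate_le_of_mem_y (le_m_of_mem_P hk.2 hz) hi
    refine ⟨hi.1, not_lt.mp fun hki ↦ ?_, fun j hij hjk ↦ hmin j hij (hjk.trans (le_of_mem_P hz))⟩
    exact (hmin z hi.2.2.1 le_rfl).not_gt (rate_lt_of_mem_P hz hki.le hi.2.2.1)
  · rintro ⟨hi, hik, hmin⟩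
    rcases hik.eq_or_lt with rfl | hik
    · exact Or.inl rfl
    · exact Or.inr (Set.mem_iUnion₂.mpr (by simpa using exists_mem_P_mem_y hi hik hk.2 hmin))

theorem mem_TIcc (hk : k ∈ Set.Icc 1 m) : i ∈ TIcc m g r k ↔ i ∈ T m g r k := by
  rw [TIcc, mem_filter, and_iff_right_iff_imp]
  intro h
  obtain ⟨hi, hik, -⟩ := (mem_T_iff hk).mp h
  exact mem_insert_of_mem (mem_Icc.mpr ⟨hi, hik.trans hk.2⟩)

theorem mem_TIcc_iff (hk : k ∈ Set.Icc 1 m) :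
    i ∈ TIcc m g r k ↔ 1 ≤ i ∧ i ≤ k ∧ ∀ j, i < j → j ≤ k → rate g r i ≤ rate g r j := by
  rw [mem_TIcc hk, mem_T_iff hk]

theorem self_mem_TIcc : k ∈ TIcc m g r k :=
  mem_filter.mpr ⟨mem_insert_self _ _, Or.inl rfl⟩

theorem mem_Icc_of_mem_TIcc (hk : k ∈ Set.Icc 1 m) (hi : i ∈ TIcc m g r k) : i ∈ Set.Icc 1 m :=
  have h := (mem_TIcc_iff hk).mp hi
  ⟨h.1, h.2.1.trans hk.2⟩

theorem monotoneOn_rate_TIcc (hk : k ∈ Set.Icc 1 m) : MonotoneOn (rate g r) (TIcc m g r k) := by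
  intro a ha b hb hab
  rcases hab.eq_or_lt with rfl | hab
  · exact le_rfl
  · exact ((mem_TIcc_iff hk).mp ha).2.2 b hab ((mem_TIcc_iff hk).mp hb).2.1

theorem TIcc_eq_filter_of_mem (hk : k ∈ Set.Icc 1 m) (hi : i ∈ TIcc m g r k) :
    TIcc m g r i = {j ∈ TIcc m g r k | j ≤ i} := by
  ext j
  obtain ⟨-, hik, hmin⟩ := (mem_TIcc_iff hk).mp hi
  rw [mem_filter, mem_TIcc_iff (mem_Icc_of_mem_TIcc hk hi), mem_TIcc_iff hk]
  refine ⟨fun ⟨hj, hji, h⟩ ↦ ⟨⟨hj, hji.trans hik, fun l hjl hlk ↦ ?_⟩, hji⟩,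
    fun ⟨⟨hj, _, h⟩, hji⟩ ↦ ⟨hj, hji, fun l hjl hli ↦ h l hjl (hli.trans hik)⟩⟩
  rcases le_or_gt l i with hli | hil
  · exact h l hjl hli
  · have hirate := hmin l hil hlk
    rcases hji.eq_or_lt with rfl | hji
    · exact hirate
    · exact (h i hji le_rfl).trans hirate

theorem exists_mem_P_mem_TIcc (hk : 1 ≤ k) (hkz : k ≤ z) (hzm : z ≤ m) :
    ∃ i ∈ P m g r k, i ∈ TIcc m g r z := by
  obtain ⟨i, hi, hiz⟩ := exists_mem_P_forall_rate_le (g := g) (r := r) hkz hzm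
  exact ⟨i, hi, (mem_TIcc_iff ⟨hk.trans hkz, hzm⟩).mpr ⟨hk.trans (le_of_mem_P hi), hiz⟩⟩

theorem idxT_spec (hk : 1 ≤ k) (hkz : k ≤ z) (hzm : z ≤ m) :
    idxT m g r z k ∈ TIcc m g r z ∧ k ∈ A m g r (idxT m g r z k) := by
  have hz : z ∈ Set.Icc 1 m := ⟨hk.trans hkz, hzm⟩
  obtain ⟨i, hi, hiT⟩ := exists_mem_P_mem_TIcc (g := g) (r := r) hk hkz hzm
  rw [mem_TIcc hz] at hiT ⊢
  exact Nat.sInf_mem (s := {i | i ∈ T m g r z ∧ k ∈ A m g r i}) ⟨i, hiT, hk, hkz.trans hzm, hi⟩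

theorem chil_spec (hk : k ∈ A m g r z) (hkz : k ≠ z) :
    p m g r (chil m g r z k) = z ∧ k ∈ A m g r (chil m g r z k) := by
  apply Nat.sInf_mem (s := {i | p m g r i = z ∧ k ∈ A m g r i})
  rcases mem_P_cases_tail hk.2.2 with h | ⟨i, hi, -, hp⟩
  · exact absurd h.symm hkz
  · exact ⟨i, hp, hk.1, hk.2.1, hi⟩

theorem rate_le_of_p_eq (hz : 1 ≤ z) (h : p m g r i = z) : rate g r z ≤ rate g r i :=
  h ▸ (pdef_of_p_eq hz h).rate_p_lt.le

theorem rate_le_of_mem_P_of_mem_P (ha : a ∈ P m g r k) (hb : b ∈ P m g r k)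
    (h : ∀ j, a < j → j ≤ b → rate g r a ≤ rate g r j) : rate g r a ≤ rate g r b := by
  rcases lt_or_ge a b with hlt | hle
  · exact h b hlt le_rfl
  · exact rate_le_of_mem_P (mem_P_of_mem_P_of_le ha (le_of_mem_P hb) hle)

end Forest

/-! ### Upper partial sums -/

section UpperSums

variable {α R : Type*} [LinearOrder α]

theorem sum_sub_upper_sums {M G : Type*} [AddCommMonoid M] [AddCommGroup G] (F : Finset α)
    (S : α → M) (f : M → G) :
    ∑ j ∈ F, (f (∑ i ∈ F with j ≤ i, S i) - f (∑ i ∈ F with j < i, S i)) =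
      f (∑ i ∈ F, S i) - f 0 := by
  induction F using Finset.induction_on_min with
  | empty => simp
  | insert a F ha ih =>
    have haF : a ∉ F := fun h ↦ (ha a h).false
    have hge : {i ∈ insert a F | a ≤ i} = insert a F := filter_true_of_mem fun i hi ↦
      (mem_insert.mp hi).elim (fun h ↦ h.ge) fun h ↦ (ha i h).le
    have hgt : {i ∈ insert a F | a < i} = F := by
      rw [filter_insert, if_neg (lt_irrefl a), filter_true_of_mem ha]
    have hF : ∀ j ∈ F, {i ∈ insert a F | j ≤ i} = {i ∈ F | j ≤ i} ∧
        {i ∈ insert a F | j < i} = {i ∈ F | j < i} := fun j hj ↦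
      ⟨by rw [filter_insert, if_neg (ha j hj).not_ge],
        by rw [filter_insert, if_neg (ha j hj).not_gt]⟩
    have hrest : ∑ j ∈ F, (f (∑ i ∈ insert a F with j ≤ i, S i) -
        f (∑ i ∈ insert a F with j < i, S i)) = f (∑ i ∈ F, S i) - f 0 :=
      (sum_congr rfl fun j hj ↦ by rw [(hF j hj).1, (hF j hj).2]).trans ih
    rw [sum_insert haF (f := fun j ↦ _), hge, hgt, hrest, sub_add_sub_cancel]

theorem sum_mul_le_sum_mul_of_upper_sums_le [CommRing R] [LinearOrder R] [IsStrictOrderedRing R]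
    {F : Finset α} {w a b : α → R} (hw : MonotoneOn w F) (hw0 : ∀ i ∈ F, 0 ≤ w i)
    (h : ∀ n ∈ F, ∑ j ∈ F with n ≤ j, a j ≤ ∑ j ∈ F with n ≤ j, b j) :
    ∑ j ∈ F, w j * a j ≤ ∑ j ∈ F, w j * b j := by
  suffices hlow : ∀ t, (∀ i ∈ F, t ≤ w i) →
      t * ∑ j ∈ F, (b j - a j) ≤ ∑ j ∈ F, w j * (b j - a j) by
    simpa [mul_sub] using hlow 0 hw0
  clear hw0
  induction F using Finset.induction_on_min with
  | empty => simp
  | insert i F hi ih =>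
    intro t ht
    have hiF : i ∉ F := fun h ↦ (hi i h).false
    have htotal : 0 ≤ ∑ j ∈ insert i F, (b j - a j) := by
      have hall := h i (mem_insert_self _ _)
      rw [filter_true_of_mem fun j hj ↦
        (mem_insert.mp hj).elim (fun h ↦ h.ge) fun h ↦ (hi j h).le] at hall
      rwa [sum_sub_distrib, sub_nonneg]
    have hF : w i * ∑ j ∈ F, (b j - a j) ≤ ∑ j ∈ F, w j * (b j - a j) := by
      refine ih (hw.mono (coe_subset.mpr (subset_insert _ _))) (fun n hn ↦ ?_) (w i) fun j hj ↦
        hw (mem_insert_self _ _) (mem_insert_of_mem hj) (hi j hj).le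
      have hupper := h n (mem_insert_of_mem hn)
      rwa [filter_insert, if_neg (hi n hn).not_ge] at hupper
    calc t * ∑ j ∈ insert i F, (b j - a j)
        ≤ w i * ∑ j ∈ insert i F, (b j - a j) :=
          mul_le_mul_of_nonneg_right (ht i (mem_insert_self _ _)) htotal
      _ = w i * (b i - a i) + w i * ∑ j ∈ F, (b j - a j) := by rw [sum_insert hiF, mul_add]
      _ ≤ ∑ j ∈ insert i F, w j * (b j - a j) := by
          rw [sum_insert hiF]
          exact add_le_add_right hF _

end UpperSums

/-! ### Job sets and embeddings -/

section Jobs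

variable {ι κ : Type*} {m : ℕ} {g r : ℕ → ℝ} {s : ι → ℝ} {s' : κ → ℝ}
  {X : Finset ι} {Y : Finset κ} {e : ι → κ} {J : ι} {i n w z : ℕ}

/-- The machine types `1, …, m` (at least one) have positive capacities and cost rates. -/
structure ValidMachines (m : ℕ) (g r : ℕ → ℝ) : Prop where
  one_le : 1 ≤ m
  g_pos : ∀ i ∈ Set.Icc 1 m, 0 < g i
  r_pos : ∀ i ∈ Set.Icc 1 m, 0 < r i

/-- Every job of `X` has a size in `(0, g(m)]`. -/
def Sized (m : ℕ) (g : ℕ → ℝ) (s : ι → ℝ) (X : Finset ι) : Prop :=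
  ∀ J ∈ X, 0 < s J ∧ s J ≤ g m

/-- `e` is a size-preserving injection of the job set `X` into the job set `Y`; this replaces
inclusion of job sets, because `𝒥(t)` and `𝒥(t0) ∪ ℋ(t0)` live in different types. -/
structure Embeds (s : ι → ℝ) (s' : κ → ℝ) (X : Finset ι) (Y : Finset κ) (e : ι → κ) : Prop where
  injOn : Set.InjOn e X
  mem : ∀ J ∈ X, e J ∈ Y
  size_eq : ∀ J ∈ X, s' (e J) = s J

theorem ValidMachines.rate_pos (hM : ValidMachines m g r) (hz : z ∈ Set.Icc 1 m) :
    0 < rate g r z :=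
  div_pos (hM.r_pos z hz) (hM.g_pos z hz)

theorem ValidMachines.g_mul_rate (hM : ValidMachines m g r) (hz : z ∈ Set.Icc 1 m) :
    g z * rate g r z = r z :=
  mul_div_cancel₀ _ (hM.g_pos z hz).ne'

theorem Embeds.nonempty (hE : Embeds s s' X Y e) (hX : X.Nonempty) : Y.Nonempty :=
  hX.elim fun J hJ ↦ ⟨e J, hE.mem J hJ⟩

theorem Embeds.sized (hE : Embeds s s' X Y e) (hY : Sized m g s' Y) : Sized m g s X :=
  fun J hJ ↦ hE.size_eq J hJ ▸ hY _ (hE.mem J hJ)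

theorem Embeds.mty_eq (hE : Embeds s s' X Y e) (hJ : J ∈ X) :
    mty m g s' (e J) = mty m g s J := by
  rw [mty, mty, hE.size_eq J hJ]

theorem mty_mem_Icc (hm : 1 ≤ m) (hX : Sized m g s X) (hJ : J ∈ X) :
    mty m g s J ∈ Set.Icc 1 m :=
  have h := Nat.sInf_mem (s := {z | 1 ≤ z ∧ z ≤ m ∧ s J ≤ g z}) ⟨m, hm, le_rfl, (hX J hJ).2⟩
  ⟨h.1, h.2.1⟩

theorem lt_size_of_lt_mty (hi : i ∈ Set.Icc 1 m) (h : i < mty m g s J) : g i < s J :=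
  not_le.mp fun hle ↦ (Nat.sInf_le ⟨hi.1, hi.2, hle⟩ : mty m g s J ≤ i).not_gt h

theorem Ssum_filter_nonneg (hX : Sized m g s X) (q : ι → Prop) [DecidablePred q] :
    0 ≤ Ssum s {J ∈ X | q J} :=
  sum_nonneg fun J hJ ↦ (hX J (mem_filter.mp hJ).1).1.le

theorem SH_nonneg (hX : Sized m g s X) : 0 ≤ SH m g r s X z :=
  Ssum_filter_nonneg hX _

theorem Embeds.Ssum_filter_le (hE : Embeds s s' X Y e) (hY : Sized m g s' Y) (q : ℕ → Prop)
    [DecidablePred q] :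
    Ssum s {J ∈ X | q (mty m g s J)} ≤ Ssum s' {K ∈ Y | q (mty m g s' K)} := by
  calc Ssum s {J ∈ X | q (mty m g s J)}
      = ∑ K ∈ {J ∈ X | q (mty m g s J)}.image e, s' K := by
        rw [sum_image (hE.injOn.mono (coe_subset.mpr (filter_subset _ _))), Ssum]
        exact sum_congr rfl fun J hJ ↦ (hE.size_eq J (mem_filter.mp hJ).1).symm
    _ ≤ Ssum s' {K ∈ Y | q (mty m g s' K)} := by
        refine sum_le_sum_of_subset_of_nonneg (fun K hK ↦ ?_)
          fun K hK _ ↦ (hY K (mem_filter.mp hK).1).1.le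
        obtain ⟨J, hJ, rfl⟩ := mem_image.mp hK
        obtain ⟨hJ, hq⟩ := mem_filter.mp hJ
        exact mem_filter.mpr ⟨hE.mem J hJ, by rwa [hE.mty_eq hJ]⟩

theorem Embeds.SH_le (hE : Embeds s s' X Y e) (hY : Sized m g s' Y) :
    SH m g r s X z ≤ SH m g r s' Y z :=
  hE.Ssum_filter_le hY (· ∈ A m g r z)

theorem exists_mty_eq_k0f (hne : X.Nonempty) : ∃ J ∈ X, mty m g s J = k0f m g s X :=
  (exists_mem_eq_sup X hne (mty m g s)).imp fun _ h ↦ ⟨h.1, h.2.symm⟩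

theorem k0f_mem_Icc (hm : 1 ≤ m) (hX : Sized m g s X) (hne : X.Nonempty) :
    k0f m g s X ∈ Set.Icc 1 m := by
  obtain ⟨J, hJ, h⟩ := exists_mty_eq_k0f (m := m) (g := g) (s := s) hne
  exact h ▸ mty_mem_Icc hm hX hJ

theorem Embeds.k0f_le (hE : Embeds s s' X Y e) : k0f m g s X ≤ k0f m g s' Y :=
  Finset.sup_le fun J hJ ↦ hE.mty_eq hJ ▸ le_sup (f := mty m g s') (hE.mem J hJ)

theorem zdia_spec (hm : 1 ≤ m) (hX : Sized m g s X) (hne : X.Nonempty) :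
    zdia m g r s X ∈ P m g r (k0f m g s X) ∧ decent m g r s X (zdia m g r s X) := by
  obtain ⟨z, hz, hroot⟩ := exists_mem_P_not_pdef (g := g) (r := r) (k0f_mem_Icc hm hX hne).2
  exact Nat.sInf_mem (s := {zs | zs ∈ P m g r (k0f m g s X) ∧ decent m g r s X zs})
    ⟨z, hz, fun zt hzt hne ↦ absurd (eq_of_mem_P_of_not_pdef hroot hzt) hne⟩

theorem mty_le_zdia (hm : 1 ≤ m) (hX : Sized m g s X) (hJ : J ∈ X) :
    mty m g s J ≤ zdia m g r s X :=
  (le_sup (f := mty m g s) hJ).trans (le_of_mem_P (zdia_spec hm hX ⟨J, hJ⟩).1)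

theorem zdia_mem_Icc (hm : 1 ≤ m) (hX : Sized m g s X) (hne : X.Nonempty) :
    zdia m g r s X ∈ Set.Icc 1 m :=
  have hk := k0f_mem_Icc hm hX hne
  have hz := (zdia_spec (r := r) hm hX hne).1
  ⟨hk.1.trans (le_of_mem_P hz), le_m_of_mem_P hk.2 hz⟩

/-! ### Capacities of the configuration `cn` -/

/-- The capacity `cn(z)·g(z)` that the configuration `cn_z` provides on its top type `z`. -/
noncomputable def topCapacity (m : ℕ) (g r : ℕ → ℝ) (s : ι → ℝ) (X : Finset ι) (z : ℕ) : ℝ :=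
  ⌈SH m g r s X z / g z⌉₊ * g z

theorem SH_le_topCapacity (hM : ValidMachines m g r) (hz : z ∈ Set.Icc 1 m) :
    SH m g r s X z ≤ topCapacity m g r s X z :=
  (div_le_iff₀ (hM.g_pos z hz)).mp (Nat.le_ceil _)

theorem topCapacity_nonneg (hM : ValidMachines m g r) (hz : z ∈ Set.Icc 1 m) :
    0 ≤ topCapacity m g r s X z :=
  mul_nonneg (Nat.cast_nonneg _) (hM.g_pos z hz).le

theorem topCapacity_le_SH_add_g (hM : ValidMachines m g r) (hX : Sized m g s X)
    (hz : z ∈ Set.Icc 1 m) :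
    topCapacity m g r s X z ≤ SH m g r s X z + g z := by
  have hg := hM.g_pos z hz
  calc topCapacity m g r s X z ≤ (SH m g r s X z / g z + 1) * g z :=
        mul_le_mul_of_nonneg_right
          (Nat.ceil_lt_add_one (div_nonneg (SH_nonneg (r := r) hX) hg.le)).le hg.le
    _ = SH m g r s X z + g z := by field_simp

theorem Embeds.topCapacity_le (hM : ValidMachines m g r) (hE : Embeds s s' X Y e)
    (hY : Sized m g s' Y) (hz : z ∈ Set.Icc 1 m) :
    topCapacity m g r s X z ≤ topCapacity m g r s' Y z := by
  have hg := (hM.g_pos z hz).le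
  unfold topCapacity
  gcongr
  exact hE.SH_le hY

theorem cn_eq_zero (hz : z ∈ Set.Icc 1 m) (hi : i ∉ TIcc m g r z) : cn m g r s X z i = 0 := by
  have hne : i ≠ z := by
    rintro rfl
    exact hi self_mem_TIcc
  simp only [cn, if_neg hne, if_neg ((mem_TIcc hz).not.mp hi)]

theorem cn_mul_g (hM : ValidMachines m g r) (hX : Sized m g s X) (hz : z ∈ Set.Icc 1 m)
    (hi : i ∈ TIcc m g r z) :
    cn m g r s X z i * g i =
      max (∑ j ∈ TIcc m g r z with i ≤ j, SH m g r s X j) (topCapacity m g r s X z) -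
      max (∑ j ∈ TIcc m g r z with i < j, SH m g r s X j) (topCapacity m g r s X z) +
      if z = i then topCapacity m g r s X z else 0 := by
  have hsucc : ∑ j ∈ TIcc m g r z with i ≤ j, SH m g r s X j =
      SH m g r s X i + ∑ j ∈ TIcc m g r z with i < j, SH m g r s X j := by
    rw [← sum_insert (by simp)]
    congr 1
    ext j
    grind
  have hgi := (hM.g_pos i (mem_Icc_of_mem_TIcc hz hi)).ne'
  have hSi : 0 ≤ SH m g r s X i := SH_nonneg hX
  rcases eq_or_ne i z with rfl | hne
  · have htop : ∑ j ∈ TIcc m g r i with i < j, SH m g r s X j = 0 :=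
      sum_eq_zero fun j hj ↦
        absurd (mem_filter.mp hj).2 ((mem_TIcc_iff hz).mp (mem_filter.mp hj).1).2.1.not_gt
    rw [hsucc, htop, add_zero, max_eq_right (SH_le_topCapacity hM hz),
      max_eq_right (topCapacity_nonneg hM hz), if_pos rfl, sub_self, zero_add]
    simp only [cn, if_true, topCapacity]
  · have hB : ⌈SH m g r s X z / g z⌉₊ * g z = topCapacity m g r s X z := rfl
    simp only [cn, if_neg hne, if_neg hne.symm, if_pos ((mem_TIcc hz).mp hi), hsucc, add_zero, hB]
    split_ifs with hboundary hbelow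
    · rw [max_eq_left hboundary.2.le, max_eq_right hboundary.1, div_mul_cancel₀ _ hgi]
    · rw [max_eq_left (by linarith), max_eq_left hbelow.le, div_mul_cancel₀ _ hgi]
      ring
    · rw [max_eq_right (by grind), max_eq_right (not_lt.mp hbelow)]
      ring

theorem sum_cn_mul_g (hM : ValidMachines m g r) (hX : Sized m g s X) (hz : z ∈ Set.Icc 1 m)
    (hn : n ∈ TIcc m g r z) :
    ∑ j ∈ TIcc m g r z with n ≤ j, cn m g r s X z j * g j =
      max (∑ j ∈ TIcc m g r z with n ≤ j, SH m g r s X j) (topCapacity m g r s X z) := by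
  set B := topCapacity m g r s X z
  set F := {j ∈ TIcc m g r z | n ≤ j}
  have hzF : z ∈ F := mem_filter.mpr ⟨self_mem_TIcc, ((mem_TIcc_iff hz).mp hn).2.1⟩
  have hterm : ∀ j ∈ F, cn m g r s X z j * g j =
      max (∑ k ∈ F with j ≤ k, SH m g r s X k) B - max (∑ k ∈ F with j < k, SH m g r s X k) B +
        if z = j then B else 0 := by
    intro j hj
    obtain ⟨hjT, hnj⟩ := mem_filter.mp hj
    have hge : {k ∈ F | j ≤ k} = {k ∈ TIcc m g r z | j ≤ k} := by grind
    have hgt : {k ∈ F | j < k} = {k ∈ TIcc m g r z | j < k} := by grind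
    rw [cn_mul_g hM hX hz hjT, hge, hgt]
  rw [sum_congr rfl hterm, sum_add_distrib, sum_sub_upper_sums F (SH m g r s X) (max · B),
    sum_ite_eq, if_pos hzF, max_eq_right (topCapacity_nonneg hM hz), sub_add_cancel]

/-! ### Monotonicity of `z⋄` -/

theorem sum_cn_mul_g_of_mem_TIcc (hM : ValidMachines m g r) (hX : Sized m g s X)
    (hw : w ∈ Set.Icc 1 m) (hi : i ∈ TIcc m g r w) (hn : n ∈ TIcc m g r w) (hni : n ≤ i) :
    ∑ j ∈ TIcc m g r w with n ≤ j, cn m g r s X i j * g j =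
      max (∑ j ∈ TIcc m g r i with n ≤ j, SH m g r s X j) (topCapacity m g r s X i) := by
  have hiI := mem_Icc_of_mem_TIcc hw hi
  have hT := TIcc_eq_filter_of_mem hw hi
  rw [← sum_cn_mul_g hM hX hiI (hT ▸ mem_filter.mpr ⟨hn, hni⟩)]
  refine (sum_subset (filter_subset_filter _ (hT ▸ filter_subset _ _)) fun j hj hji ↦ ?_).symm
  rw [cn_eq_zero hiI fun h ↦ hji (mem_filter.mpr ⟨h, (mem_filter.mp hj).2⟩), zero_mul]

/-- Rounding up on type `i` wastes less than `g i`, which is covered by a job of `Y` that does not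
fit into type `i`. -/
theorem Embeds.topCapacity_le_upper_sum (hM : ValidMachines m g r) (hE : Embeds s s' X Y e)
    (hY : Sized m g s' Y) (hw : w ∈ Set.Icc 1 m) (hi : i ∈ TIcc m g r w) (hiw : i < w)
    (hni : n ≤ i) {K : κ} (hK : K ∈ Y) (hKw : mty m g s' K ∈ A m g r w)
    (hiK : i < mty m g s' K) :
    topCapacity m g r s X i ≤ ∑ j ∈ TIcc m g r w with n ≤ j, SH m g r s' Y j := by
  have hiI := mem_Icc_of_mem_TIcc hw hi
  have hgSH : g i ≤ SH m g r s' Y w :=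
    (lt_size_of_lt_mty hiI hiK).le.trans <| single_le_sum (f := s')
      (fun L hL ↦ (hY L (mem_filter.mp hL).1).1.le) (mem_filter.mpr ⟨hK, hKw⟩)
  calc topCapacity m g r s X i
      ≤ SH m g r s X i + g i := topCapacity_le_SH_add_g hM (hE.sized hY) hiI
    _ ≤ SH m g r s' Y i + SH m g r s' Y w := add_le_add (hE.SH_le hY) hgSH
    _ = ∑ j ∈ {i, w}, SH m g r s' Y j := (sum_pair hiw.ne).symm
    _ ≤ ∑ j ∈ TIcc m g r w with n ≤ j, SH m g r s' Y j := by
        refine sum_le_sum_of_subset_of_nonneg (fun j hj ↦ ?_) fun j _ _ ↦ SH_nonneg hY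
        rcases mem_insert.mp hj with rfl | hj
        · exact mem_filter.mpr ⟨hi, hni⟩
        · rw [mem_singleton.mp hj]
          exact mem_filter.mpr ⟨self_mem_TIcc, hni.trans hiw.le⟩

theorem Embeds.sum_cn_mul_g_le (hM : ValidMachines m g r) (hE : Embeds s s' X Y e)
    (hY : Sized m g s' Y) (hne : Y.Nonempty) (hw : w ∈ P m g r (k0f m g s' Y))
    (hi : i ∈ TIcc m g r w) (hn : n ∈ TIcc m g r w) :
    ∑ j ∈ TIcc m g r w with n ≤ j, cn m g r s X i j * g j ≤
      ∑ j ∈ TIcc m g r w with n ≤ j, cn m g r s' Y w j * g j := by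
  obtain ⟨K, hK, hKk⟩ := exists_mty_eq_k0f (m := m) (g := g) (s := s') hne
  have hKI := mty_mem_Icc hM.one_le hY hK
  rw [← hKk] at hw
  have hwI : w ∈ Set.Icc 1 m := ⟨hKI.1.trans (le_of_mem_P hw), le_m_of_mem_P hKI.2 hw⟩
  obtain ⟨-, hiw, hmin⟩ := (mem_TIcc_iff hwI).mp hi
  have hT := TIcc_eq_filter_of_mem hwI hi
  rw [sum_cn_mul_g hM hY hwI hn]
  rcases lt_or_ge i n with hin | hni
  · refine le_max_of_le_left ((sum_nonpos fun j hj ↦ ?_).trans (sum_nonneg fun j _ ↦ SH_nonneg hY))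
    have hiI := mem_Icc_of_mem_TIcc hwI hi
    have hji : j ∉ TIcc m g r i := fun h ↦
      (hin.trans_le (mem_filter.mp hj).2).not_ge ((mem_TIcc_iff hiI).mp h).2.1
    rw [cn_eq_zero hiI hji, zero_mul]
  rw [sum_cn_mul_g_of_mem_TIcc hM (hE.sized hY) hwI hi hn hni]
  refine max_le (le_max_of_le_left ?_) ?_
  · calc ∑ j ∈ TIcc m g r i with n ≤ j, SH m g r s X j
        ≤ ∑ j ∈ TIcc m g r i with n ≤ j, SH m g r s' Y j := sum_le_sum fun j _ ↦ hE.SH_le hY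
      _ ≤ ∑ j ∈ TIcc m g r w with n ≤ j, SH m g r s' Y j :=
        sum_le_sum_of_subset_of_nonneg (filter_subset_filter _ (hT ▸ filter_subset _ _))
          fun j _ _ ↦ SH_nonneg hY
  · rcases hiw.eq_or_lt with rfl | hiw
    · exact le_max_of_le_right (hE.topCapacity_le hM hY hwI)
    · have hiK : i < mty m g s' K := not_le.mp fun hKi ↦
        (hmin w hiw le_rfl).not_gt (rate_lt_of_mem_P hw hKi hiw)
      exact le_max_of_le_left (hE.topCapacity_le_upper_sum hM hY hwI hi hiw hni hK
        ⟨hKI.1, hKI.2, hw⟩ hiK)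

theorem Embeds.sum_cn_mul_r_le (hM : ValidMachines m g r) (hE : Embeds s s' X Y e)
    (hY : Sized m g s' Y) (hne : Y.Nonempty) (hw : w ∈ P m g r (k0f m g s' Y))
    (hi : i ∈ TIcc m g r w) (hwz : w ≤ z) :
    ∑ j ∈ TIcc m g r w with j ∈ A m g r z, cn m g r s X i j * r j ≤
      ∑ j ∈ TIcc m g r w with j ∈ A m g r z, cn m g r s' Y w j * r j := by
  have hk := k0f_mem_Icc hM.one_le hY hne
  have hwI : w ∈ Set.Icc 1 m := ⟨hk.1.trans (le_of_mem_P hw), le_m_of_mem_P hk.2 hw⟩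
  set F := {j ∈ TIcc m g r w | j ∈ A m g r z}
  have hFT : F ⊆ TIcc m g r w := filter_subset _ _
  have hrate : ∀ j ∈ F, ∀ c : ℝ, c * r j = rate g r j * (c * g j) := fun j hj c ↦ by
    rw [mul_left_comm, mul_comm (rate g r j),
      hM.g_mul_rate (mem_Icc_of_mem_TIcc hwI (hFT hj))]
  have hupper : ∀ n ∈ F, {j ∈ F | n ≤ j} = {j ∈ TIcc m g r w | n ≤ j} := by
    intro n hn
    refine (filter_subset_filter _ hFT).antisymm fun j hj ↦ ?_
    obtain ⟨hjT, hnj⟩ := mem_filter.mp hj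
    have hjI := mem_Icc_of_mem_TIcc hwI hjT
    have hjw := ((mem_TIcc_iff hwI).mp hjT).2.1
    exact mem_filter.mpr ⟨mem_filter.mpr ⟨hjT, hjI.1, hjI.2,
      mem_P_of_mem_P_of_le (mem_filter.mp hn).2.2.2 hnj (hjw.trans hwz)⟩, hnj⟩
  rw [sum_congr rfl fun j hj ↦ hrate j hj _, sum_congr rfl fun j hj ↦ hrate j hj (cn _ _ _ _ Y _ _)]
  refine sum_mul_le_sum_mul_of_upper_sums_le
    ((monotoneOn_rate_TIcc hwI).mono (coe_subset.mpr hFT))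
    (fun j hj ↦ (hM.rate_pos (mem_Icc_of_mem_TIcc hwI (hFT hj))).le) fun n hn ↦ ?_
  rw [hupper n hn]
  exact hE.sum_cn_mul_g_le hM hY hne hw hi (hFT hn)

theorem Embeds.decent_of_mem_TIcc (hM : ValidMachines m g r) (hE : Embeds s s' X Y e)
    (hY : Sized m g s' Y) (hne : Y.Nonempty) (hw : w ∈ P m g r (k0f m g s' Y))
    (hdec : decent m g r s' Y w) (hi : i ∈ TIcc m g r w) : decent m g r s X i := by
  intro z hz hzi
  have hk := k0f_mem_Icc hM.one_le hY hne
  have hwI : w ∈ Set.Icc 1 m := ⟨hk.1.trans (le_of_mem_P hw), le_m_of_mem_P hk.2 hw⟩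
  obtain ⟨-, hiw, hmin⟩ := (mem_TIcc_iff hwI).mp hi
  have hiz : i < z := lt_of_le_of_ne (le_of_mem_P hz) hzi.symm
  have hwz : w < z := not_le.mp fun hzw ↦ (hmin z hiz hzw).not_gt (rate_lt_of_mem_P hz le_rfl hiz)
  calc ∑ j ∈ TIcc m g r i with j ∈ A m g r z, cn m g r s X i j * r j
      = ∑ j ∈ TIcc m g r w with j ∈ A m g r z, cn m g r s X i j * r j := by
        refine sum_subset (filter_subset_filter _
          (TIcc_eq_filter_of_mem hwI hi ▸ filter_subset _ _)) fun j hj hji ↦ ?_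
        rw [cn_eq_zero (mem_Icc_of_mem_TIcc hwI hi) fun h ↦
          hji (mem_filter.mpr ⟨h, (mem_filter.mp hj).2⟩), zero_mul]
    _ ≤ ∑ j ∈ TIcc m g r w with j ∈ A m g r z, cn m g r s' Y w j * r j :=
        hE.sum_cn_mul_r_le hM hY hne hw hi hwz.le
    _ ≤ r z := hdec z (mem_P_of_mem_P_of_le hz hiw hwz.le) hwz.ne'

theorem Embeds.zdia_le (hM : ValidMachines m g r) (hE : Embeds s s' X Y e)
    (hY : Sized m g s' Y) (hne : X.Nonempty) : zdia m g r s X ≤ zdia m g r s' Y := by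
  have hneY := hE.nonempty hne
  have hwI := zdia_mem_Icc (r := r) hM.one_le hY hneY
  obtain ⟨hw, hdec⟩ := zdia_spec (r := r) hM.one_le hY hneY
  obtain ⟨i, hi, hiT⟩ := exists_mem_P_mem_TIcc (g := g) (r := r)
    (k0f_mem_Icc hM.one_le (hE.sized hY) hne).1 (hE.k0f_le.trans (le_of_mem_P hw)) hwI.2
  have hzi : zdia m g r s X ≤ i := Nat.sInf_le ⟨hi, hE.decent_of_mem_TIcc hM hY hneY hw hdec hiT⟩
  exact hzi.trans ((mem_TIcc_iff hwI).mp hiT).2.1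

/-! ### Charged costs -/

/-- The paper's `c`: the cost of serving `H_z(X)` at the rate of `z` for the jobs of exact type `z`
and at the rates of the children of `z` for the other jobs. -/
noncomputable def childCost (m : ℕ) (g r : ℕ → ℝ) (s : ι → ℝ) (X : Finset ι) (z : ℕ) : ℝ :=
  Ssum s {J ∈ X | mty m g s J = z} * rate g r z +
    ∑ i ∈ fchFin m g r z, SH m g r s X i * rate g r i

/-- The denominator of the paper's `α*`: how much `childCost` exceeds the cost of the same jobs at
the rate of `z`. -/
noncomputable def childExcess (m : ℕ) (g r : ℕ → ℝ) (s : ι → ℝ) (X : Finset ι) (z : ℕ) : ℝ :=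
  ∑ i ∈ fchFin m g r z, SH m g r s X i * (rate g r i - rate g r z)

/-- The paper's `α*`, extended by `1` to the case `S(H_z) ≥ g(z)` and by `0` to the case `c ≤ r(z)`,
so that `charge_of_mty_ne` holds in all cases. -/
noncomputable def discount (m : ℕ) (g r : ℕ → ℝ) (s : ι → ℝ) (X : Finset ι) (z : ℕ) : ℝ :=
  if g z ≤ SH m g r s X z then 1
  else max (childCost m g r s X z - r z) 0 / childExcess m g r s X z

/-- The paper's `β*`, extended by `0` to the cases `S(H_z) ≥ g(z)` and `c > r(z)`, so that
`charge_of_mty_eq` holds in all cases. -/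
noncomputable def surcharge (m : ℕ) (g r : ℕ → ℝ) (s : ι → ℝ) (X : Finset ι) (z : ℕ) : ℝ :=
  if g z ≤ SH m g r s X z then 0
  else max (r z - childCost m g r s X z) 0 / (Ssum s {J ∈ X | mty m g s J = z} * rate g r z)

theorem charge_of_notMem_A (hz : zdia m g r s X = z) (hA : mty m g s J ∉ A m g r z) :
    charge m g r s X J = s J * rate g r (idxT m g r z (mty m g s J)) := by
  subst hz
  exact if_neg hA

theorem charge_of_mty_eq (hz : zdia m g r s X = z) (hzI : z ∈ Set.Icc 1 m)
    (hJ : mty m g s J = z) :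
    charge m g r s X J = s J * rate g r z * (1 + surcharge m g r s X z) := by
  have hA : z ∈ A m g r z := ⟨hzI.1, hzI.2, mem_P_self⟩
  simp only [charge, hz, hJ, if_pos hA, if_true, surcharge, childCost, rate]
  split_ifs with hfull hc
  · rw [add_zero, mul_one]
  · rw [max_eq_right (sub_nonpos.mpr hc.le), zero_div, add_zero, mul_one]
  · rw [max_eq_left (sub_nonneg.mpr (not_lt.mp hc))]

theorem charge_of_mty_ne (hz : zdia m g r s X = z) (hA : mty m g s J ∈ A m g r z)
    (hJ : mty m g s J ≠ z) :
    charge m g r s X J = s J * (rate g r (chil m g r z (mty m g s J)) -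
      (rate g r (chil m g r z (mty m g s J)) - rate g r z) * discount m g r s X z) := by
  simp only [charge, hz, if_pos hA, if_neg hJ, discount, childCost, childExcess, rate, SH, Ssum,
    sum_mul]
  split_ifs with hfull hc
  · rw [mul_one, sub_sub_cancel]
  · rw [max_eq_left (sub_nonneg.mpr hc.le)]
  · rw [max_eq_right (sub_nonpos.mpr (not_lt.mp hc)), zero_div, mul_zero, sub_zero]

theorem p_eq_of_mem_fchFin (h : i ∈ fchFin m g r z) : p m g r i = z :=
  (mem_filter.mp h).2

theorem rate_le_of_mem_fchFin (hz : 1 ≤ z) (h : i ∈ fchFin m g r z) :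
    rate g r z ≤ rate g r i :=
  rate_le_of_p_eq hz (p_eq_of_mem_fchFin h)

theorem childExcess_nonneg (hX : Sized m g s X) (hz : 1 ≤ z) : 0 ≤ childExcess m g r s X z :=
  sum_nonneg fun _ hi ↦ mul_nonneg (SH_nonneg hX) (sub_nonneg.mpr (rate_le_of_mem_fchFin hz hi))

theorem Embeds.childExcess_le (hE : Embeds s s' X Y e) (hY : Sized m g s' Y) (hz : 1 ≤ z) :
    childExcess m g r s X z ≤ childExcess m g r s' Y z :=
  sum_le_sum fun _ hi ↦ mul_le_mul_of_nonneg_right (hE.SH_le hY)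
    (sub_nonneg.mpr (rate_le_of_mem_fchFin hz hi))

theorem childCost_sub_childExcess :
    childCost m g r s X z - childExcess m g r s X z =
      (Ssum s {J ∈ X | mty m g s J = z} + ∑ i ∈ fchFin m g r z, SH m g r s X i) * rate g r z := by
  simp only [childExcess, childCost, mul_sub, sum_sub_distrib, ← sum_mul]
  ring

theorem Embeds.childCost_sub_childExcess_le (hM : ValidMachines m g r) (hE : Embeds s s' X Y e)
    (hY : Sized m g s' Y) (hz : z ∈ Set.Icc 1 m) :
    childCost m g r s X z - childExcess m g r s X z ≤
      childCost m g r s' Y z - childExcess m g r s' Y z := by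
  rw [childCost_sub_childExcess, childCost_sub_childExcess]
  exact mul_le_mul_of_nonneg_right (add_le_add (hE.Ssum_filter_le hY (· = z))
    (sum_le_sum fun i _ ↦ hE.SH_le hY)) (hM.rate_pos hz).le

theorem Embeds.childCost_le (hM : ValidMachines m g r) (hE : Embeds s s' X Y e)
    (hY : Sized m g s' Y) (hz : z ∈ Set.Icc 1 m) :
    childCost m g r s X z ≤ childCost m g r s' Y z := by
  have hdiff := hE.childCost_sub_childExcess_le hM hY hz
  have hexcess := hE.childExcess_le (r := r) hY hz.1
  linarith

theorem pairwiseDisjoint_H_fchFin (hz : 1 ≤ z) :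
    (fchFin m g r z : Set ℕ).PairwiseDisjoint fun i ↦ H m g r s i X := by
  intro a ha b hb hab
  refine disjoint_left.mpr fun J hJa hJb ↦ hab ?_
  have hpa := p_eq_of_mem_fchFin ha
  exact eq_of_p_eq (mem_filter.mp hJa).2.2.2 (mem_filter.mp hJb).2.2.2
    (hpa.trans (p_eq_of_mem_fchFin hb).symm) (pdef_of_p_eq hz hpa)

theorem disjoint_filter_mty_eq_biUnion_H (hz : 1 ≤ z) :
    Disjoint {J ∈ X | mty m g s J = z} ((fchFin m g r z).biUnion fun i ↦ H m g r s i X) := by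
  refine disjoint_left.mpr fun J hJz hJ ↦ ?_
  obtain ⟨i, hi, hJi⟩ := mem_biUnion.mp hJ
  have hp := p_eq_of_mem_fchFin hi
  have hiz := (pdef_of_p_eq hz hp).lt_p
  have hJi := le_of_mem_P (mem_filter.mp hJi).2.2.2
  have hJz := (mem_filter.mp hJz).2
  omega

theorem Ssum_mty_eq_add_sum_SH_le (hX : Sized m g s X) (hz : z ∈ Set.Icc 1 m) :
    Ssum s {J ∈ X | mty m g s J = z} + ∑ i ∈ fchFin m g r z, SH m g r s X i ≤
      SH m g r s X z := by
  simp only [SH, Ssum]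
  rw [← sum_biUnion (pairwiseDisjoint_H_fchFin hz.1),
    ← sum_union (disjoint_filter_mty_eq_biUnion_H hz.1)]
  refine sum_le_sum_of_subset_of_nonneg (union_subset (fun J hJ ↦ ?_) fun J hJ ↦ ?_)
    fun J hJ _ ↦ (hX J (mem_filter.mp hJ).1).1.le
  · obtain ⟨hJ, hJz⟩ := mem_filter.mp hJ
    exact mem_filter.mpr ⟨hJ, hJz.symm ▸ ⟨hz.1, hz.2, mem_P_self⟩⟩
  · obtain ⟨i, hi, hJi⟩ := mem_biUnion.mp hJ
    obtain ⟨hJ, hJ1, hJm, hJP⟩ := mem_filter.mp hJi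
    have hp := p_eq_of_mem_fchFin hi
    exact mem_filter.mpr ⟨hJ, hJ1, hJm,
      mem_P_trans hJP (hp ▸ (pdef_of_p_eq hz.1 hp).p_mem_P)⟩

theorem childCost_sub_childExcess_lt (hM : ValidMachines m g r) (hX : Sized m g s X)
    (hz : z ∈ Set.Icc 1 m) (hfull : SH m g r s X z < g z) :
    childCost m g r s X z - childExcess m g r s X z < r z := by
  have hρ := hM.rate_pos hz
  rw [childCost_sub_childExcess]
  calc _ ≤ SH m g r s X z * rate g r z :=
        mul_le_mul_of_nonneg_right (Ssum_mty_eq_add_sum_SH_le hX hz) hρ.le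
    _ < g z * rate g r z := mul_lt_mul_of_pos_right hfull hρ
    _ = r z := hM.g_mul_rate hz

theorem discount_nonneg (hX : Sized m g s X) (hz : 1 ≤ z) : 0 ≤ discount m g r s X z := by
  unfold discount
  split_ifs
  · exact zero_le_one
  · exact div_nonneg (le_max_right _ _) (childExcess_nonneg hX hz)

theorem discount_le_one (hM : ValidMachines m g r) (hX : Sized m g s X) (hz : z ∈ Set.Icc 1 m) :
    discount m g r s X z ≤ 1 := by
  unfold discount
  split_ifs with hfull
  · exact le_rfl
  · have hlt := childCost_sub_childExcess_lt hM hX hz (not_le.mp hfull)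
    have hexcess := childExcess_nonneg (r := r) hX hz.1
    exact div_le_one_of_le₀ (max_le (by linarith) hexcess) hexcess

theorem surcharge_nonneg (hM : ValidMachines m g r) (hX : Sized m g s X) (hz : z ∈ Set.Icc 1 m) :
    0 ≤ surcharge m g r s X z := by
  unfold surcharge
  split_ifs
  · exact le_rfl
  · exact div_nonneg (le_max_right _ _)
      (mul_nonneg (Ssum_filter_nonneg hX _) (hM.rate_pos hz).le)

/-- Below full capacity `α* = 1 - (r(z) - (c - x))/x` with `x = childExcess`; both `x` and
`c - x < r(z)` grow with the job set. -/
theorem Embeds.discount_le (hM : ValidMachines m g r) (hE : Embeds s s' X Y e)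
    (hY : Sized m g s' Y) (hz : z ∈ Set.Icc 1 m) :
    discount m g r s X z ≤ discount m g r s' Y z := by
  have hX := hE.sized hY
  by_cases hYfull : g z ≤ SH m g r s' Y z
  · exact (discount_le_one hM hX hz).trans_eq (if_pos hYfull).symm
  have hXfull : ¬ g z ≤ SH m g r s X z := fun h ↦ hYfull (h.trans (hE.SH_le hY))
  by_cases hXc : childCost m g r s X z ≤ r z
  · have hXzero : discount m g r s X z = 0 := by
      rw [discount, if_neg hXfull, max_eq_right (sub_nonpos.mpr hXc), zero_div]
    exact hXzero.trans_le (discount_nonneg hY hz.1)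
  have hltX := childCost_sub_childExcess_lt hM hX hz (not_le.mp hXfull)
  have hdiff := hE.childCost_sub_childExcess_le hM hY hz
  have hexcess := hE.childExcess_le (r := r) hY hz.1
  rw [discount, discount, if_neg hXfull, if_neg hYfull, max_eq_left (by linarith),
    max_eq_left (by linarith), div_le_div_iff₀ (by linarith) (by linarith)]
  nlinarith [mul_nonneg (sub_nonneg.mpr hexcess) (sub_nonneg.mpr hltX.le)]

theorem Embeds.surcharge_le (hM : ValidMachines m g r) (hE : Embeds s s' X Y e)
    (hY : Sized m g s' Y) (hz : z ∈ Set.Icc 1 m) (hJ : J ∈ X) (hJz : mty m g s J = z) :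
    surcharge m g r s' Y z ≤ surcharge m g r s X z := by
  have hX := hE.sized hY
  by_cases hYfull : g z ≤ SH m g r s' Y z
  · exact (if_pos hYfull).trans_le (surcharge_nonneg hM hX hz)
  have hXfull : ¬ g z ≤ SH m g r s X z := fun h ↦ hYfull (h.trans (hE.SH_le hY))
  have hpos : 0 < Ssum s {J ∈ X | mty m g s J = z} :=
    sum_pos (fun K hK ↦ (hX K (mem_filter.mp hK).1).1) ⟨J, mem_filter.mpr ⟨hJ, hJz⟩⟩
  have hρ := hM.rate_pos hz
  rw [surcharge, surcharge, if_neg hXfull, if_neg hYfull]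
  exact div_le_div₀ (le_max_right _ _)
    (max_le_max (sub_le_sub_left (hE.childCost_le hM hY hz) _) le_rfl) (mul_pos hpos hρ)
    (mul_le_mul_of_nonneg_right (hE.Ssum_filter_le hY (· = z)) hρ.le)

theorem mul_rate_le_charge (hM : ValidMachines m g r) (hX : Sized m g s X) (hJ : J ∈ X)
    (hz : zdia m g r s X = z) (hA : mty m g s J ∈ A m g r z) :
    s J * rate g r z ≤ charge m g r s X J := by
  have hsJ := (hX J hJ).1.le
  have hzI : z ∈ Set.Icc 1 m := hz ▸ zdia_mem_Icc hM.one_le hX ⟨J, hJ⟩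
  rcases eq_or_ne (mty m g s J) z with hJz | hJz
  · rw [charge_of_mty_eq hz hzI hJz]
    exact le_mul_of_one_le_right (mul_nonneg hsJ (hM.rate_pos hzI).le)
      (le_add_of_nonneg_right (surcharge_nonneg hM hX hzI))
  · rw [charge_of_mty_ne hz hA hJz]
    refine mul_le_mul_of_nonneg_left (le_sub_comm.mpr ?_) hsJ
    exact mul_le_of_le_one_right (sub_nonneg.mpr (rate_le_of_p_eq hzI.1 (chil_spec hA hJz).1))
      (discount_le_one hM hX hzI)

theorem charge_le_mul_rate_chil (hM : ValidMachines m g r) (hX : Sized m g s X) (hJ : J ∈ X)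
    (hz : zdia m g r s X = z) (hA : mty m g s J ∈ A m g r z) (hJz : mty m g s J ≠ z) :
    charge m g r s X J ≤ s J * rate g r (chil m g r z (mty m g s J)) := by
  have hzI : z ∈ Set.Icc 1 m := hz ▸ zdia_mem_Icc hM.one_le hX ⟨J, hJ⟩
  rw [charge_of_mty_ne hz hA hJz]
  refine mul_le_mul_of_nonneg_left (sub_le_self _ (mul_nonneg ?_ ?_)) (hX J hJ).1.le
  · exact sub_nonneg.mpr (rate_le_of_p_eq hzI.1 (chil_spec hA hJz).1)
  · exact discount_nonneg hX hzI.1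

theorem exists_mem_P_mul_rate_le_charge (hM : ValidMachines m g r) (hX : Sized m g s X)
    (hJ : J ∈ X) :
    ∃ a ∈ P m g r (mty m g s J), a ≤ zdia m g r s X ∧
      s J * rate g r a ≤ charge m g r s X J := by
  have hzI := zdia_mem_Icc (r := r) hM.one_le hX ⟨J, hJ⟩
  by_cases hA : mty m g s J ∈ A m g r (zdia m g r s X)
  · exact ⟨_, hA.2.2, le_rfl, mul_rate_le_charge hM hX hJ rfl hA⟩
  · obtain ⟨hT, hidx⟩ := idxT_spec (g := g) (r := r) (mty_mem_Icc hM.one_le hX hJ).1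
      (mty_le_zdia hM.one_le hX hJ) hzI.2
    exact ⟨_, hidx.2.2, ((mem_TIcc_iff hzI).mp hT).2.1, (charge_of_notMem_A rfl hA).ge⟩

theorem exists_mem_P_charge_le_mul_rate (hM : ValidMachines m g r) (hX : Sized m g s X)
    (hJ : J ∈ X) (hne : mty m g s J ≠ zdia m g r s X) :
    ∃ b ∈ P m g r (mty m g s J),
      (∀ j, b < j → j < zdia m g r s X → rate g r b ≤ rate g r j) ∧
      charge m g r s X J ≤ s J * rate g r b := by
  have hzI := zdia_mem_Icc (r := r) hM.one_le hX ⟨J, hJ⟩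
  by_cases hA : mty m g s J ∈ A m g r (zdia m g r s X)
  · obtain ⟨hp, hchil⟩ := chil_spec hA hne
    exact ⟨_, hchil.2.2, fun j hbj hjz ↦ rate_le_of_lt_p (hjz.le.trans hzI.2) hbj.le
      (hp.symm ▸ hjz), charge_le_mul_rate_chil hM hX hJ rfl hA hne⟩
  · obtain ⟨hT, hidx⟩ := idxT_spec (g := g) (r := r) (mty_mem_Icc hM.one_le hX hJ).1
      (mty_le_zdia hM.one_le hX hJ) hzI.2
    exact ⟨_, hidx.2.2, fun j hbj hjz ↦ ((mem_TIcc_iff hzI).mp hT).2.2 j hbj hjz.le,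
      (charge_of_notMem_A rfl hA).le⟩

theorem Embeds.charge_le_of_zdia_eq (hM : ValidMachines m g r) (hE : Embeds s s' X Y e)
    (hY : Sized m g s' Y) (hJ : J ∈ X) (hzX : zdia m g r s X = z) (hzY : zdia m g r s' Y = z) :
    charge m g r s' Y (e J) ≤ charge m g r s X J := by
  have hX := hE.sized hY
  have hsJ := (hX J hJ).1.le
  have hty : mty m g s' (e J) = mty m g s J := hE.mty_eq hJ
  have hzI : z ∈ Set.Icc 1 m := hzX ▸ zdia_mem_Icc hM.one_le hX ⟨J, hJ⟩
  by_cases hA : mty m g s J ∈ A m g r z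
  · rcases eq_or_ne (mty m g s J) z with hJz | hJz
    · rw [charge_of_mty_eq hzX hzI hJz, charge_of_mty_eq hzY hzI (hty.trans hJz), hE.size_eq J hJ]
      exact mul_le_mul_of_nonneg_left (add_le_add_right (hE.surcharge_le hM hY hzI hJ hJz) _)
        (mul_nonneg hsJ (hM.rate_pos hzI).le)
    · rw [charge_of_mty_ne hzX hA hJz, charge_of_mty_ne hzY (hty ▸ hA) (hty ▸ hJz), hty,
        hE.size_eq J hJ]
      have hchil := sub_nonneg.mpr (rate_le_of_p_eq hzI.1 (chil_spec hA hJz).1)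
      exact mul_le_mul_of_nonneg_left
        (sub_le_sub_left (mul_le_mul_of_nonneg_left (hE.discount_le hM hY hzI) hchil) _) hsJ
  · rw [charge_of_notMem_A hzX hA, charge_of_notMem_A hzY (hty ▸ hA), hty, hE.size_eq J hJ]

theorem Embeds.charge_le (hM : ValidMachines m g r) (hE : Embeds s s' X Y e)
    (hY : Sized m g s' Y) (hJ : J ∈ X) : charge m g r s' Y (e J) ≤ charge m g r s X J := by
  have hX := hE.sized hY
  rcases (hE.zdia_le (r := r) hM hY ⟨J, hJ⟩).eq_or_lt with hzw | hzw
  · exact hE.charge_le_of_zdia_eq hM hY hJ rfl hzw.symm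
  have hne : mty m g s' (e J) ≠ zdia m g r s' Y := by
    rw [hE.mty_eq hJ]
    exact ((mty_le_zdia hM.one_le hX hJ).trans_lt hzw).ne
  obtain ⟨a, ha, haz, hlow⟩ := exists_mem_P_mul_rate_le_charge hM hX hJ
  obtain ⟨b, hb, hbw, hupp⟩ := exists_mem_P_charge_le_mul_rate hM hY (hE.mem J hJ) hne
  rw [hE.mty_eq hJ] at hb
  calc charge m g r s' Y (e J) ≤ s J * rate g r b := hE.size_eq J hJ ▸ hupp
    _ ≤ s J * rate g r a := mul_le_mul_of_nonneg_left
        (rate_le_of_mem_P_of_mem_P hb ha fun j hbj hja ↦ hbw j hbj ((hja.trans haz).trans_lt hzw))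
        (hX J hJ).1.le
    _ ≤ charge m g r s X J := hlow

end Jobs

/-! ### Jobs with active intervals -/

section Time

variable {ι : Type*} {m : ℕ} {g r : ℕ → ℝ} {s Ilo Ihi : ι → ℝ} {𝒥 : Finset ι} {J : ι} {d t t0 : ℝ}

/-- The set `G_t` of the jobs of `𝒥` that ended within the last `d` time units before `t`. -/
noncomputable def recentJ (Ihi : ι → ℝ) (𝒥 : Finset ι) (d t : ℝ) : Finset ι :=
  {J ∈ 𝒥 | t - d < Ihi J ∧ Ihi J ≤ t}

/-- The time `τ_J`: the image of `t` under the affine map taking `[I(J)⁺, I(J)⁺ + d)`, where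
the follow-up of `J` lives, onto `I(J)`. -/
noncomputable def shiftedTime (Ilo Ihi : ι → ℝ) (d t : ℝ) (J : ι) : ℝ :=
  (t - Ihi J) / d * (Ihi J - Ilo J) + Ilo J

/-- The job of `𝒥 ∪ ℋ` representing `J` at time `t`: `J` itself while it is active, and its
follow-up `F_d(J)` otherwise. -/
noncomputable def representative (Ilo Ihi : ι → ℝ) (t : ℝ) (J : ι) : ι ⊕ ι :=
  if Ilo J ≤ t ∧ t < Ihi J then Sum.inl J else Sum.inr J

theorem mem_activeJ : J ∈ activeJ Ilo Ihi 𝒥 t ↔ J ∈ 𝒥 ∧ Ilo J ≤ t ∧ t < Ihi J :=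
  mem_filter

theorem mem_recentJ : J ∈ recentJ Ihi 𝒥 d t ↔ J ∈ 𝒥 ∧ t - d < Ihi J ∧ Ihi J ≤ t :=
  mem_filter

theorem shiftedTime_mem_Ico (hJ : J ∈ recentJ Ihi 𝒥 d t) (hlen : 0 < Ihi J - Ilo J) :
    shiftedTime Ilo Ihi d t J ∈ Set.Ico (Ilo J) (Ihi J) := by
  obtain ⟨-, hlow, hle⟩ := mem_recentJ.mp hJ
  have hd : 0 < d := by linarith
  have hq0 : 0 ≤ (t - Ihi J) / d := div_nonneg (by linarith) hd.le
  have hq1 : (t - Ihi J) / d < 1 := (div_lt_one hd).mpr (by linarith)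
  have hlt := mul_lt_mul_of_pos_right hq1 hlen
  have hnonneg := mul_nonneg hq0 hlen.le
  constructor <;> unfold shiftedTime <;> linarith

theorem sub_le_shiftedTime (hJ : J ∈ recentJ Ihi 𝒥 d t) (hlen : Ihi J - Ilo J ≤ d) :
    t - d ≤ shiftedTime Ilo Ihi d t J := by
  obtain ⟨-, hlow, hle⟩ := mem_recentJ.mp hJ
  have hd : 0 < d := by linarith
  have hq1 : (t - Ihi J) / d ≤ 1 := (div_le_one hd).mpr (by linarith)
  have hscale := mul_le_mul_of_nonneg_left hlen (sub_nonneg.mpr hq1)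
  have hqd : (t - Ihi J) / d * d = t - Ihi J := div_mul_cancel₀ _ hd.ne'
  unfold shiftedTime
  linarith

theorem activeJH_eq_disjSum (ht : t ∈ spanSet Ilo Ihi 𝒥) :
    activeJH Ilo Ihi 𝒥 d t = (activeJ Ilo Ihi 𝒥 t).disjSum (recentJ Ihi 𝒥 d t) := by
  ext (J | J)
  · simp [activeJH, activeJ]
  · simp [activeJH, mem_recentJ, ht, sub_lt_iff_lt_add, and_comm (a := Ihi J ≤ t)]

theorem sized_activeJH (hs : Sized m g s 𝒥) :
    Sized m g (Sum.elim s s) (activeJH Ilo Ihi 𝒥 d t) := by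
  rintro (J | J) hJ <;>
  · refine hs J ?_
    simpa using (mem_filter.mp hJ).1

theorem embeds_activeJH (ht0 : t0 ∈ spanSet Ilo Ihi 𝒥) (hlow : t0 - d ≤ t) (hle : t ≤ t0) :
    Embeds s (Sum.elim s s) (activeJ Ilo Ihi 𝒥 t) (activeJH Ilo Ihi 𝒥 d t0)
      (representative Ilo Ihi t0) where
  injOn J _ K _ h := by
    unfold representative at h
    split_ifs at h <;> simpa using h
  mem J hJ := by
    obtain ⟨hJ, hlo, hhi⟩ := mem_activeJ.mp hJ
    rw [activeJH_eq_disjSum ht0, representative]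
    split_ifs with hactive
    · exact inl_mem_disjSum.mpr (mem_activeJ.mpr ⟨hJ, hactive⟩)
    · exact inr_mem_disjSum.mpr (mem_recentJ.mpr ⟨hJ, hlow.trans_lt hhi,
        not_lt.mp fun h ↦ hactive ⟨hlo.trans hle, h⟩⟩)
  size_eq J _ := by
    unfold representative
    split_ifs <;> rfl

theorem sum_charge_activeJH_le (hM : ValidMachines m g r) (hs : Sized m g s 𝒥)
    (hd : 0 ≤ d) (ht0 : t0 ∈ spanSet Ilo Ihi 𝒥) {τ : ι → ℝ}
    (hτ : ∀ J ∈ recentJ Ihi 𝒥 d t0, J ∈ activeJ Ilo Ihi 𝒥 (τ J) ∧ τ J ∈ Set.Icc (t0 - d) t0) :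
    ∑ x ∈ activeJH Ilo Ihi 𝒥 d t0,
        charge m g r (Sum.elim s s) (activeJH Ilo Ihi 𝒥 d t0) x ≤
      ∑ J ∈ activeJ Ilo Ihi 𝒥 t0, charge m g r s (activeJ Ilo Ihi 𝒥 t0) J +
        ∑ J ∈ recentJ Ihi 𝒥 d t0, charge m g r s (activeJ Ilo Ihi 𝒥 (τ J)) J := by
  have hmono : ∀ {t : ℝ} {J : ι}, t0 - d ≤ t → t ≤ t0 → J ∈ activeJ Ilo Ihi 𝒥 t →
      charge m g r (Sum.elim s s) (activeJH Ilo Ihi 𝒥 d t0) (representative Ilo Ihi t0 J) ≤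
        charge m g r s (activeJ Ilo Ihi 𝒥 t) J := fun hlow hle hJ ↦
    (embeds_activeJH ht0 hlow hle).charge_le hM (sized_activeJH hs) hJ
  nth_rw 1 [activeJH_eq_disjSum ht0]
  rw [sum_disjSum]
  refine add_le_add (sum_le_sum fun J hJ ↦ ?_) (sum_le_sum fun J hJ ↦ ?_)
  · have hrep : representative Ilo Ihi t0 J = Sum.inl J := if_pos (mem_activeJ.mp hJ).2
    exact hrep ▸ hmono (sub_le_self _ hd) le_rfl hJ
  · have hrep : representative Ilo Ihi t0 J = Sum.inr J :=
      if_neg fun h ↦ h.2.not_ge (mem_recentJ.mp hJ).2.2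
    obtain ⟨hJτ, hlow, hle⟩ := hτ J hJ
    exact hrep ▸ hmono hlow hle hJτ

theorem shiftedTime_mem_inter (hJ : J ∈ recentJ Ihi 𝒥 d t) (hpos : 0 < Ihi J - Ilo J)
    (hlen : Ihi J - Ilo J ≤ d) :
    shiftedTime Ilo Ihi d t J ∈ Set.Ico (Ilo J) (Ihi J) ∩ Set.Ico (t - d) t := by
  have hI := shiftedTime_mem_Ico hJ hpos
  exact ⟨hI, sub_le_shiftedTime hJ hlen, hI.2.trans_le (mem_recentJ.mp hJ).2.2⟩

theorem statement_19_general (hM : ValidMachines m g r) (hs : Sized m g s 𝒥)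
    (hlen : ∀ J ∈ 𝒥, 0 < Ihi J - Ilo J ∧ Ihi J - Ilo J ≤ d) (ht0 : t0 ∈ spanSet Ilo Ihi 𝒥) :
    (∀ J ∈ recentJ Ihi 𝒥 d t0,
        shiftedTime Ilo Ihi d t0 J ∈ Set.Ico (Ilo J) (Ihi J) ∩ Set.Ico (t0 - d) t0) ∧
      ∑ x ∈ activeJH Ilo Ihi 𝒥 d t0,
          charge m g r (Sum.elim s s) (activeJH Ilo Ihi 𝒥 d t0) x ≤
        ∑ J ∈ activeJ Ilo Ihi 𝒥 t0, charge m g r s (activeJ Ilo Ihi 𝒥 t0) J +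
          ∑ J ∈ recentJ Ihi 𝒥 d t0,
            charge m g r s (activeJ Ilo Ihi 𝒥 (shiftedTime Ilo Ihi d t0 J)) J := by
  have hτ : ∀ J ∈ recentJ Ihi 𝒥 d t0,
      shiftedTime Ilo Ihi d t0 J ∈ Set.Ico (Ilo J) (Ihi J) ∩ Set.Ico (t0 - d) t0 := by
    intro J hJ
    obtain ⟨hpos, hle⟩ := hlen J (mem_recentJ.mp hJ).1
    exact shiftedTime_mem_inter hJ hpos hle
  have hd : 0 ≤ d := by
    obtain ⟨J, hJ, -⟩ := Set.mem_iUnion₂.mp ht0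
    exact (hlen J hJ).1.le.trans (hlen J hJ).2
  exact ⟨hτ, sum_charge_activeJH_le hM hs hd ht0 fun J hJ ↦
    ⟨mem_activeJ.mpr ⟨(mem_recentJ.mp hJ).1, (hτ J hJ).1⟩,
      Set.Ico_subset_Icc_self (hτ J hJ).2⟩⟩

end Time

theorem pos_of_forall_lt {m : ℕ} {f : ℕ → ℝ} (h1 : 0 < f 1)
    (hf : ∀ i j, 1 ≤ i → i < j → j ≤ m → f i < f j) : ∀ i ∈ Set.Icc 1 m, 0 < f i := by
  rintro i ⟨hi, him⟩
  rcases hi.eq_or_lt with rfl | hi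
  · exact h1
  · exact h1.trans (hf 1 i le_rfl hi him)

/-- For every `t0 ∈ span(𝒥)`, with
`G_{t0} := {J ∈ 𝒥 : t0 − d < I(J)⁺ ≤ t0}` and, for `J ∈ G_{t0}`,
`τ_J := ((t0 − I(J)⁺)/d)·len(J) + I(J)⁻`:
(i) `τ_J ∈ I(J) ∩ [t0 − d, t0)` for every `J ∈ G_{t0}`; and
(ii) `∑_{J ∈ 𝒥(t0)} r̃(𝒥(t0))(J) + ∑_{J ∈ G_{t0}} r̃(𝒥(τ_J))(J) ≥
∑_{J ∈ 𝒥(t0) ∪ ℋ(t0)} r̃(𝒥(t0) ∪ ℋ(t0))(J)`. -/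
theorem statement_19 {ι : Type*} (m : ℕ) (g r : ℕ → ℝ) (s Ilo Ihi : ι → ℝ)
    (𝒥 : Finset ι) (μ d : ℝ)
    (hm : 1 ≤ m)
    (hg1 : 0 < g 1) (hr1 : 0 < r 1)
    (hg : ∀ i j, 1 ≤ i → i < j → j ≤ m → g i < g j)
    (hr : ∀ i j, 1 ≤ i → i < j → j ≤ m → r i < r j)
    (hJ : 𝒥.Nonempty)
    (hs : ∀ J ∈ 𝒥, 0 < s J ∧ s J ≤ g m)
    (hμ : 1 ≤ μ)
    (hlen : ∀ J ∈ 𝒥, 1 ≤ Ihi J - Ilo J ∧ Ihi J - Ilo J ≤ μ)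
    (hd : μ ≤ d)
    (t0 : ℝ) (ht0 : t0 ∈ spanSet Ilo Ihi 𝒥) :
    (∀ J ∈ 𝒥.filter (fun J => t0 - d < Ihi J ∧ Ihi J ≤ t0),
        (Ilo J ≤ (t0 - Ihi J) / d * (Ihi J - Ilo J) + Ilo J ∧
         (t0 - Ihi J) / d * (Ihi J - Ilo J) + Ilo J < Ihi J) ∧
        t0 - d ≤ (t0 - Ihi J) / d * (Ihi J - Ilo J) + Ilo J ∧
        (t0 - Ihi J) / d * (Ihi J - Ilo J) + Ilo J < t0) ∧
    (∑ x ∈ activeJH Ilo Ihi 𝒥 d t0,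
        charge m g r (Sum.elim s s) (activeJH Ilo Ihi 𝒥 d t0) x)
      ≤ (∑ J ∈ activeJ Ilo Ihi 𝒥 t0,
            charge m g r s (activeJ Ilo Ihi 𝒥 t0) J)
        + ∑ J ∈ 𝒥.filter (fun J => t0 - d < Ihi J ∧ Ihi J ≤ t0),
            charge m g r s
              (activeJ Ilo Ihi 𝒥 ((t0 - Ihi J) / d * (Ihi J - Ilo J) + Ilo J)) J := by
  exact statement_19_general ⟨hm, pos_of_forall_lt hg1 hg, pos_of_forall_lt hr1 hr⟩ hs
    (fun J hJ ↦ ⟨one_pos.trans_le (hlen J hJ).1, (hlen J hJ).2.trans hd⟩) ht0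

end BSHM
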